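/- Fix an integer N ≥ 1 and a real q with 0 < q < 1. For all x ∈ ℤ^N, all y ∈ ℤ^{N+1} with y_0 ≥ 0, and all 1 ≤ i ≤ j ≤ N: (a) H(x⁻_{j,i}, y) − H(x,y) = (q^{−(y_i + y_{i+1} + … + y_j)} − 1) H(x,y); (b) if j ≤ N−1 then q^{x_i−x_j−(j−i)} (1 − q^{x_j−x_{j+1}−1}) H(x,y) = H(x, y^{j,i}) − H(x, y^{j+1,i}), and if j = N then q^{x_i−x_N−(N−i)} H(x,y) = H(x, y^{N,i}) (matching the convention q^{x_N−x_{N+1}−1} := 0). -/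

import Mathlib

/-!
STATEMENT 2: elementary identities for H under a left jump x⁻_{j,i}.
-/

/-- `H(x,y) = 0` if `y₀ > 0`, and `H(x,y) = ∏_{i=1}^N q^{(xᵢ+i) yᵢ}` otherwise. -/
noncomputable def Hfun (q : ℝ) (N : ℕ) (x : ℕ → ℤ) (y : ℕ → ℤ) : ℝ :=
  if 0 < y 0 then 0 else ∏ i ∈ Finset.Icc 1 N, q ^ ((x i + (i : ℤ)) * y i)

/-- `x⁻_{j,i}`: the configuration `x` with `x_i, …, x_j` each decreased by 1. -/
def xminus (x : ℕ → ℤ) (j i : ℕ) : ℕ → ℤ :=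
  fun m => if i ≤ m ∧ m ≤ j then x m - 1 else x m

/-- `y^{j,i}`: `y` with `y_j` decreased by 1 and `y_i` increased by 1. -/
def ymove (y : ℕ → ℤ) (j i : ℕ) : ℕ → ℤ :=
  fun m => y m + (if m = i then 1 else 0) - (if m = j then 1 else 0)

theorem prod_zpow_eq_zpow_sum {ι G : Type*} [CommGroupWithZero G] {a : G} (ha : a ≠ 0)
    (s : Finset ι) (f : ι → ℤ) : ∏ m ∈ s, a ^ f m = a ^ ∑ m ∈ s, f m := by
  induction s using Finset.cons_induction with
  | empty => simp
  | cons m s _ ih => rw [Finset.prod_cons, Finset.sum_cons, ih, zpow_add₀ ha]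

theorem ymove_apply_of_ne (y : ℕ → ℤ) {i j m : ℕ} (hi : m ≠ i) (hj : m ≠ j) :
    ymove y j i m = y m := by
  simp [ymove, hi, hj]

/-- The exponent `∑ₘ (xₘ + m) yₘ` of `q` in the nonzero branch of `Hfun`: it is affine in `x` and
linear in `y`, so jumps of `x` and `y` shift it additively and multiply `H` by a power of `q`. -/
def Hexponent (N : ℕ) (x y : ℕ → ℤ) : ℤ :=
  ∑ m ∈ Finset.Icc 1 N, (x m + (m : ℤ)) * y m

section Exponent

variable {N i j : ℕ} (x y : ℕ → ℤ)

theorem Hexponent_xminus (hi : 1 ≤ i) (hj : j ≤ N) :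
    Hexponent N (xminus x j i) y = -(∑ m ∈ Finset.Icc i j, y m) + Hexponent N x y := by
  have summand (m : ℕ) : (xminus x j i m + (m : ℤ)) * y m
      = -(if m ∈ Finset.Icc i j then y m else 0) + (x m + (m : ℤ)) * y m := by
    simp only [xminus, Finset.mem_Icc]
    split_ifs <;> ring
  simp only [Hexponent, summand, Finset.sum_add_distrib, Finset.sum_neg_distrib,
    Finset.sum_ite_mem, Finset.inter_eq_right.2 (Finset.Icc_subset_Icc hi hj)]

theorem Hexponent_ymove (hi : i ∈ Finset.Icc 1 N) (hj : j ∈ Finset.Icc 1 N) :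
    Hexponent N x (ymove y j i) = (x i - x j - ((j : ℤ) - (i : ℤ))) + Hexponent N x y := by
  simp only [Hexponent, ymove, mul_sub, mul_add, mul_ite, mul_one, mul_zero,
    Finset.sum_add_distrib, Finset.sum_sub_distrib, Finset.sum_ite_eq', hi, hj, if_true]
  ring

end Exponent

section Jumps

variable {q : ℝ} {N i j : ℕ} (x y : ℕ → ℤ)

theorem Hfun_eq_zpow_Hexponent (hq : q ≠ 0) (N : ℕ) :
    Hfun q N x y = if 0 < y 0 then 0 else q ^ Hexponent N x y := by
  rw [Hfun, prod_zpow_eq_zpow_sum hq, Hexponent]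

theorem Hfun_eq_zpow_mul_of_Hexponent_eq_add (hq : q ≠ 0) {x' y' : ℕ → ℤ} {c : ℤ}
    (h0 : y' 0 = y 0) (hc : Hexponent N x' y' = c + Hexponent N x y) :
    Hfun q N x' y' = q ^ c * Hfun q N x y := by
  rw [Hfun_eq_zpow_Hexponent x' y' hq, Hfun_eq_zpow_Hexponent x y hq, h0, hc, zpow_add₀ hq,
    mul_ite, mul_zero]

theorem Hfun_xminus (hq : q ≠ 0) (hi : 1 ≤ i) (hj : j ≤ N) :
    Hfun q N (xminus x j i) y = q ^ (-(∑ m ∈ Finset.Icc i j, y m)) * Hfun q N x y :=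
  Hfun_eq_zpow_mul_of_Hexponent_eq_add x y hq rfl (Hexponent_xminus x y hi hj)

theorem Hfun_ymove (hq : q ≠ 0) (hi : i ∈ Finset.Icc 1 N) (hj : j ∈ Finset.Icc 1 N) :
    Hfun q N x (ymove y j i) = q ^ (x i - x j - ((j : ℤ) - (i : ℤ))) * Hfun q N x y := by
  have hi0 : 0 ≠ i := Nat.ne_of_lt (Finset.mem_Icc.1 hi).1
  have hj0 : 0 ≠ j := Nat.ne_of_lt (Finset.mem_Icc.1 hj).1
  exact Hfun_eq_zpow_mul_of_Hexponent_eq_add x y hq (ymove_apply_of_ne y hi0 hj0)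
    (Hexponent_ymove x y hi hj)

theorem Hfun_ymove_succ (hq : q ≠ 0) (hi : i ∈ Finset.Icc 1 N) (hj : 1 ≤ j) (hjN : j < N) :
    Hfun q N x (ymove y (j + 1) i) = q ^ (x j - x (j + 1) - 1) * Hfun q N x (ymove y j i) := by
  have exponent_split : x i - x (j + 1) - (((j + 1 : ℕ) : ℤ) - (i : ℤ))
      = (x j - x (j + 1) - 1) + (x i - x j - ((j : ℤ) - (i : ℤ))) := by
    push_cast
    ring
  rw [Hfun_ymove x y hq hi (Finset.mem_Icc.2 ⟨by omega, hjN⟩),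
    Hfun_ymove x y hq hi (Finset.mem_Icc.2 ⟨hj, hjN.le⟩), exponent_split, zpow_add₀ hq,
    mul_assoc]

end Jumps

theorem H_left_jump_identities_general (N : ℕ) {q : ℝ} (hq : q ≠ 0) (x y : ℕ → ℤ) :
    (∀ i j, 1 ≤ i → j ≤ N →
      Hfun q N (xminus x j i) y - Hfun q N x y
        = (q ^ (-(∑ m ∈ Finset.Icc i j, y m)) - 1) * Hfun q N x y)
    ∧ (∀ i j, 1 ≤ i → i ≤ N → 1 ≤ j → j < N →
        q ^ (x i - x j - ((j : ℤ) - (i : ℤ))) * (1 - q ^ (x j - x (j + 1) - 1))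
            * Hfun q N x y
          = Hfun q N x (ymove y j i) - Hfun q N x (ymove y (j + 1) i))
    ∧ (∀ i, 1 ≤ i → i ≤ N →
        q ^ (x i - x N - ((N : ℤ) - (i : ℤ))) * Hfun q N x y
          = Hfun q N x (ymove y N i)) := by
  refine ⟨fun i j hi hj => ?_, fun i j hi hiN hj hjN => ?_, fun i hi hiN => ?_⟩
  · rw [Hfun_xminus x y hq hi hj, sub_one_mul]
  · have hi' : i ∈ Finset.Icc 1 N := Finset.mem_Icc.2 ⟨hi, hiN⟩
    rw [Hfun_ymove_succ x y hq hi' hj hjN,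
      Hfun_ymove x y hq hi' (Finset.mem_Icc.2 ⟨hj, hjN.le⟩)]
    ring
  · exact (Hfun_ymove x y hq (Finset.mem_Icc.2 ⟨hi, hiN⟩)
      (Finset.right_mem_Icc.2 (hi.trans hiN))).symm

theorem H_left_jump_identities (N : ℕ) (hN : 1 ≤ N) (q : ℝ) (hq0 : 0 < q) (hq1 : q < 1)
    (x : ℕ → ℤ) (y : ℕ → ℤ) (hy0 : 0 ≤ y 0) :
    (∀ i j, 1 ≤ i → i ≤ j → j ≤ N →
      Hfun q N (xminus x j i) y - Hfun q N x y
        = (q ^ (-(∑ m ∈ Finset.Icc i j, y m)) - 1) * Hfun q N x y)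
    ∧ (∀ i j, 1 ≤ i → i ≤ j → j ≤ N - 1 →
        q ^ (x i - x j - ((j : ℤ) - (i : ℤ))) * (1 - q ^ (x j - x (j+1) - 1))
            * Hfun q N x y
          = Hfun q N x (ymove y j i) - Hfun q N x (ymove y (j+1) i))
    ∧ (∀ i, 1 ≤ i → i ≤ N →
        q ^ (x i - x N - ((N : ℤ) - (i : ℤ))) * Hfun q N x y
          = Hfun q N x (ymove y N i)) := by
  obtain ⟨left_jump, move_sub_move_succ, move_last⟩ := H_left_jump_identities_general N hq0.ne' x y
  exact ⟨fun i j hi _ => left_jump i j hi, fun i j hi hij hj =>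
    move_sub_move_succ i j hi (by omega) (hi.trans hij) (by omega), move_last⟩
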